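/- arXiv:2009.07196 — 3 statements merged into one kernel-verified Lean document; each statement's English description precedes it below -/
import Mathlib

section
/- Let H ∈ {0,1}^{n×k} be a partition indicator matrix of an externally equitable partition (EEP) of a symmetric matrix A ∈ ℝ^{n×n} with nonnegative entries, i.e. L H = H L^π where L = diag(A·1) − A and L^π = H† L H. Let ΔA ∈ ℝ^{n×n} be a symmetric matrix with nonnegative entries such that ΔA_{ij} = 0 whenever nodes i and j belong to different groups of H (ΔA adds only within-group edges). Then the quotient Laplacian is unchanged: H† (diag((A+ΔA)·1) − (A+ΔA)) H = H† (diag(A·1) − A) H. -/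
open Matrix BigOperators

/-!
The Laplacian is additive in the weights, so it suffices that `L_ΔA H = 0`. The entry of `L_ΔA H`
at `(i, c)` is the weighted sum of differences `∑ j, ΔA i j * (H i c - H j c)`: within a group the
difference vanishes, and between groups the weight does.
-/

section WeightedLaplacian

variable {ι κ R : Type*} [Fintype ι] [DecidableEq ι]

/-- The combinatorial Laplacian `L = diag(A·1) - A` of a weight matrix `A`. The row sums are the
degrees, and `A` may be any square matrix, so asymmetric and negative weights are allowed. -/
def weightedLaplacian [AddCommGroup R] (A : Matrix ι ι R) : Matrix ι ι R :=
  diagonal (fun i => ∑ j, A i j) - A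

theorem weightedLaplacian_add [AddCommGroup R] (A B : Matrix ι ι R) :
    weightedLaplacian (A + B) = weightedLaplacian A + weightedLaplacian B := by
  simp only [weightedLaplacian, Matrix.add_apply, Finset.sum_add_distrib, ← diagonal_add,
    add_sub_add_comm]

variable [NonUnitalNonAssocRing R]

theorem weightedLaplacian_mul_apply (A : Matrix ι ι R) (M : Matrix ι κ R) (i : ι) (c : κ) :
    (weightedLaplacian A * M) i c = ∑ j, A i j * (M i c - M j c) := by
  rw [weightedLaplacian, Matrix.sub_mul, Matrix.sub_apply, diagonal_mul, mul_apply, Finset.sum_mul]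
  simp only [mul_sub, Finset.sum_sub_distrib]

theorem weightedLaplacian_mul_eq_zero {A : Matrix ι ι R} {M : Matrix ι κ R}
    (h : ∀ i j, A i j ≠ 0 → M i = M j) :
    weightedLaplacian A * M = 0 := by
  ext i c
  rw [weightedLaplacian_mul_apply]
  refine Finset.sum_eq_zero fun j _ => ?_
  by_cases hij : A i j = 0
  · rw [hij, zero_mul]
  · rw [h i j hij, sub_self, mul_zero]

end WeightedLaplacian

section PartitionIndicator

variable {ι κ : Type*} [DecidableEq κ]

/-- The indicator matrix `H` of the partition of `ι` into the fibres of `g`, with one column for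
each label in `κ`. Labels outside the range of `g` are allowed and give zero columns. -/
def partitionIndicator (R : Type*) [Zero R] [One R] (g : ι → κ) : Matrix ι κ R :=
  of fun i c => if g i = c then 1 else 0

variable {R : Type*}

theorem partitionIndicator_row_eq [Zero R] [One R] {g : ι → κ} {i j : ι} (h : g i = g j) :
    partitionIndicator R g i = partitionIndicator R g j := by
  ext c
  simp only [partitionIndicator, of_apply, h]

variable [Fintype ι] [DecidableEq ι] {g : ι → κ}

theorem weightedLaplacian_mul_partitionIndicator_eq_zero [NonAssocRing R] {B : Matrix ι ι R}
    (hB : ∀ i j, g i ≠ g j → B i j = 0) :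
    weightedLaplacian B * partitionIndicator R g = 0 :=
  weightedLaplacian_mul_eq_zero fun i j hij =>
    partitionIndicator_row_eq (not_imp_comm.mp (hB i j) hij)

theorem quotient_laplacian_invariant_under_within_group_edges_general {m : Type*} [Ring R]
    (P : Matrix m ι R) (A : Matrix ι ι R) {ΔA : Matrix ι ι R}
    (hΔwithin : ∀ i j, g i ≠ g j → ΔA i j = 0) :
    P * weightedLaplacian (A + ΔA) * partitionIndicator R g
      = P * weightedLaplacian A * partitionIndicator R g := by
  rw [weightedLaplacian_add, Matrix.mul_assoc, Matrix.add_mul,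
    weightedLaplacian_mul_partitionIndicator_eq_zero hΔwithin, add_zero, ← Matrix.mul_assoc]

end PartitionIndicator

/-- If `H` is the indicator matrix of an externally equitable partition (EEP)
of a symmetric nonnegative matrix `A` (i.e. `L H = H L^π` with `L = diag(A·1) − A` and
`L^π = H† L H`), and `ΔA` is a symmetric nonnegative matrix adding only within-group edges,
then the quotient Laplacian is unchanged. -/
theorem quotient_laplacian_invariant_under_within_group_edges
    {n k : ℕ} (g : Fin n → Fin k) (hg : Function.Surjective g)
    (H : Matrix (Fin n) (Fin k) ℝ)
    (hH : H = Matrix.of fun i j => if g i = j then (1 : ℝ) else 0)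
    (Hdag : Matrix (Fin k) (Fin n) ℝ) (hHdag : Hdag = (Hᵀ * H)⁻¹ * Hᵀ)
    (A : Matrix (Fin n) (Fin n) ℝ) (hAsymm : A.IsSymm) (hAnn : ∀ i j, 0 ≤ A i j)
    (L : Matrix (Fin n) (Fin n) ℝ)
    (hL : L = Matrix.diagonal (fun i => ∑ j, A i j) - A)
    (hEEP : L * H = H * (Hdag * L * H))
    (ΔA : Matrix (Fin n) (Fin n) ℝ) (hΔsymm : ΔA.IsSymm) (hΔnn : ∀ i j, 0 ≤ ΔA i j)
    (hΔwithin : ∀ i j, g i ≠ g j → ΔA i j = 0) :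
    Hdag * (Matrix.diagonal (fun i => ∑ j, (A + ΔA) i j) - (A + ΔA)) * H
      = Hdag * (Matrix.diagonal (fun i => ∑ j, A i j) - A) * H := by
  subst hH
  exact quotient_laplacian_invariant_under_within_group_edges_general Hdag A hΔwithin
end

section
/- Let V ∈ ℝ^{n×m} with rows v₁,…,vₙ ∈ ℝ^m, and let H ∈ {0,1}^{n×k} be a partition indicator matrix with group sizes n₁,…,n_k. Define the group centroids μ_j = (1/n_j) Σ_{i=1}^n H_{ij} v_i for j = 1,…,k. Then the k-means objective for this assignment equals the squared projection error: Σ_{j=1}^k Σ_{i=1}^n H_{ij} ‖v_i − μ_j‖² = ‖(I − H H†) V‖_F². Consequently, a partition minimizes the k-means objective on the rows of V over all partitions into k nonempty groups if and only if it minimizes the squared projection error ‖(I − H H†) V‖_F². -/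
open Matrix BigOperators

/-- The indicator matrix of the partition of `Fin n` given by the group map `g`. -/
noncomputable def indicatorMatrix {n k : ℕ} (g : Fin n → Fin k) : Matrix (Fin n) (Fin k) ℝ :=
  Matrix.of fun i j => if g i = j then (1 : ℝ) else 0

/-- The squared projection error `‖(I − H H†) V‖_F²` of the partition `g` w.r.t. `V`. -/
noncomputable def projErrorSq {n k m : ℕ} (g : Fin n → Fin k)
    (V : Matrix (Fin n) (Fin m) ℝ) : ℝ :=
  let H := indicatorMatrix g
  let Hdag := (Hᵀ * H)⁻¹ * Hᵀ
  ∑ i, ∑ a, ((((1 : Matrix (Fin n) (Fin n) ℝ) - H * Hdag) * V) i a) ^ 2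

/-- The `k`-means objective `Σ_j Σ_i H_{ij} ‖v_i − μ_j‖²` for the assignment `g` of the rows
`v_1, …, v_n` of `V`, where `μ_j = (1/n_j) Σ_i H_{ij} v_i` is the centroid of group `j`. -/
noncomputable def kmeansObjective {n k m : ℕ} (g : Fin n → Fin k)
    (V : Matrix (Fin n) (Fin m) ℝ) : ℝ :=
  let H := indicatorMatrix g
  let μ : Fin k → Fin m → ℝ := fun j a =>
    (∑ i, H i j * V i a) / ((Finset.univ.filter (fun i => g i = j)).card : ℝ)
  ∑ j, ∑ i, H i j * (∑ a, (V i a - μ j a) ^ 2)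

/-! Left multiplication by the indicator matrix `H` gives point `i` the row indexed by its group,
while `H† V = N⁻¹ Hᵀ V` is the matrix of centroids. Hence row `i` of `(I − H H†) V` is `v_i` minus
the centroid of its group, and both objectives are the sum of the squared lengths of these rows. -/

section MembershipMatrix

open Finset

variable {ι κ α R K : Type*}

theorem natCast_card_fiber_ne_zero [Fintype ι] [DecidableEq κ] [AddMonoidWithOne R] [CharZero R]
    {g : ι → κ} (hg : Function.Surjective g) (j : κ) : (#{i | g i = j} : R) ≠ 0 := by
  obtain ⟨i, hi⟩ := hg j
  exact Nat.cast_ne_zero.mpr (card_ne_zero_of_mem (mem_filter.mpr ⟨mem_univ i, hi⟩))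

/-- The indicator matrix over `R` of the partition of `ι` into the fibers of `g`, as rows of the
identity matrix: row `i` is the basis vector of the group `g i`. -/
def membershipMatrix [DecidableEq κ] (R : Type*) [Zero R] [One R] (g : ι → κ) : Matrix ι κ R :=
  (1 : Matrix κ κ R).submatrix g id

/-- The centroids of the fibers of `g`, where the rows of `V` are the points: row `j` is the mean
of the points in group `j`, and is `0` by the convention `x / 0 = 0` when the size of that group is
zero in `K`. -/
def centroidMatrix [Fintype ι] [DecidableEq κ] [DivisionRing K] (g : ι → κ) (V : Matrix ι α K) :
    Matrix κ α K :=
  Matrix.of fun j a => ((membershipMatrix K g)ᵀ * V) j a / #{i | g i = j}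

/-- The matrix `H H† = H (Hᵀ H)⁻¹ Hᵀ` projecting onto the column space of the membership
matrix `H` of `g`. It is the zero matrix when `Hᵀ H` is not invertible, in particular when a
group is empty and `R` is nontrivial. -/
noncomputable def membershipProjection [Fintype ι] [Fintype κ] [DecidableEq κ] (R : Type*)
    [CommRing R] (g : ι → κ) : Matrix ι ι R :=
  membershipMatrix R g *
    (((membershipMatrix R g)ᵀ * membershipMatrix R g)⁻¹ * (membershipMatrix R g)ᵀ)

theorem membershipMatrix_apply [DecidableEq κ] [Zero R] [One R] (g : ι → κ) (i : ι) (j : κ) :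
    membershipMatrix R g i j = if g i = j then 1 else 0 :=
  Matrix.one_apply

theorem membershipMatrix_mul [Fintype κ] [DecidableEq κ] [NonAssocSemiring R] (g : ι → κ)
    (M : Matrix κ α R) : membershipMatrix R g * M = M.submatrix g id :=
  Matrix.one_submatrix_mul g (Equiv.refl κ) M

theorem sum_sum_membershipMatrix_mul [Fintype ι] [Fintype κ] [DecidableEq κ]
    [NonAssocSemiring R] (g : ι → κ) (f : ι → κ → R) :
    ∑ j, ∑ i, membershipMatrix R g i j * f i j = ∑ i, f i (g i) := by
  rw [sum_comm]
  simp only [membershipMatrix_apply, ite_mul, one_mul, zero_mul, sum_ite_eq, mem_univ, if_true]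

theorem membershipMatrix_transpose_mul_self [Fintype ι] [DecidableEq κ] [NonAssocSemiring R]
    (g : ι → κ) :
    (membershipMatrix R g)ᵀ * membershipMatrix R g =
      Matrix.diagonal fun j => (#{i | g i = j} : R) := by
  ext j j'
  calc ((membershipMatrix R g)ᵀ * membershipMatrix R g) j j'
      = ∑ i with g i = j, membershipMatrix R g i j' := by
        simp only [Matrix.mul_apply, Matrix.transpose_apply, membershipMatrix_apply g _ j,
          ite_mul, one_mul, zero_mul, sum_filter]
    _ = ∑ i with g i = j, if j = j' then (1 : R) else 0 :=
        sum_congr rfl fun i hi => by rw [membershipMatrix_apply, (mem_filter.mp hi).2]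
    _ = if j = j' then (#{i | g i = j} : R) else 0 := by
        rw [sum_const, nsmul_eq_mul, mul_ite, mul_one, mul_zero]

variable [Fintype ι] [Fintype κ] [DecidableEq κ] [Field K]

theorem inv_membershipMatrix_transpose_mul_self {g : ι → κ}
    (hg : ∀ j, (#{i | g i = j} : K) ≠ 0) :
    ((membershipMatrix K g)ᵀ * membershipMatrix K g)⁻¹ =
      Matrix.diagonal fun j => (#{i | g i = j} : K)⁻¹ := by
  rw [membershipMatrix_transpose_mul_self]
  apply Matrix.inv_eq_right_inv
  simp only [Matrix.diagonal_mul_diagonal, mul_inv_cancel₀ (hg _), Matrix.diagonal_one]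

theorem membershipProjection_mul {g : ι → κ} (hg : ∀ j, (#{i | g i = j} : K) ≠ 0)
    (V : Matrix ι α K) :
    membershipProjection K g * V = (centroidMatrix g V).submatrix g id := by
  have gram_inv_mul : (Matrix.diagonal fun j => (#{i | g i = j} : K)⁻¹) *
      ((membershipMatrix K g)ᵀ * V) = centroidMatrix g V := by
    ext j a
    rw [Matrix.diagonal_mul, centroidMatrix, Matrix.of_apply, div_eq_inv_mul]
  rw [membershipProjection, inv_membershipMatrix_transpose_mul_self hg, Matrix.mul_assoc,
    Matrix.mul_assoc, gram_inv_mul, membershipMatrix_mul]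

theorem kmeans_eq_projection_error_general [Fintype α] [DecidableEq ι] {g : ι → κ}
    (hg : ∀ j, (#{i | g i = j} : K) ≠ 0) (V : Matrix ι α K) :
    ∑ j, ∑ i, membershipMatrix K g i j * ∑ a, (V i a - centroidMatrix g V j a) ^ 2 =
      ∑ i, ∑ a, (((1 : Matrix ι ι K) - membershipProjection K g) * V) i a ^ 2 := by
  rw [sum_sum_membershipMatrix_mul, Matrix.sub_mul, Matrix.one_mul, membershipProjection_mul hg]
  rfl

end MembershipMatrix

theorem kmeansObjective_eq_projErrorSq {n k m : ℕ} {g : Fin n → Fin k}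
    (hg : Function.Surjective g) (V : Matrix (Fin n) (Fin m) ℝ) :
    kmeansObjective g V = projErrorSq g V :=
  kmeans_eq_projection_error_general (natCast_card_fiber_ne_zero hg) V

/-- The `k`-means objective for an assignment into `k` nonempty groups equals
the squared projection error; consequently, a partition minimizes the `k`-means objective on the
rows of `V` over all partitions into `k` nonempty groups iff it minimizes the squared projection
error. -/
theorem kmeans_eq_projection_error
    {n k m : ℕ} (V : Matrix (Fin n) (Fin m) ℝ) :
    (∀ g : Fin n → Fin k, Function.Surjective g → kmeansObjective g V = projErrorSq g V)
      ∧ ∀ g₀ : Fin n → Fin k, Function.Surjective g₀ →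
          ((∀ g : Fin n → Fin k, Function.Surjective g →
              kmeansObjective g₀ V ≤ kmeansObjective g V)
            ↔ (∀ g : Fin n → Fin k, Function.Surjective g →
                projErrorSq g₀ V ≤ projErrorSq g V)) := by
  refine ⟨fun g hg => kmeansObjective_eq_projErrorSq hg V,
    fun g₀ hg₀ => forall₂_congr fun g hg => ?_⟩
  rw [kmeansObjective_eq_projErrorSq hg₀, kmeansObjective_eq_projErrorSq hg]
end

section
/- Let H ∈ {0,1}^{n×k} be a partition indicator matrix into k nonempty groups and let S ⊆ ℝⁿ be a κ-dimensional subspace (1 ≤ κ ≤ k ≤ n) contained in the column span of H. Let U be a random n×(k−κ) real matrix whose columns are almost surely orthonormal and orthogonal to S, and whose distribution is invariant under left multiplication by every orthogonal Q ∈ O(n) that fixes S pointwise. Then E[‖(I − H H†) U‖_F²] = (n − k)(k − κ)/(n − κ). Moreover, if B = [V_S, U] ∈ ℝ^{n×k} where the columns of V_S lie in S, then E[‖(I − H H†) B‖_F²] = (n − k)(k − κ)/(n − κ). -/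
open Matrix MeasureTheory BigOperators

/-!
An orthogonal map fixing `S` pointwise can carry any vector of `Sᗮ` to any other of the same length
(a reflection does it), so `E⟪u, X⟫²` takes the same value at all unit vectors `u ∈ Sᗮ` when the law
of `X` is invariant under such maps. Summing over an orthonormal basis of `Sᗮ` shows that this value
is `E‖X‖² / dim Sᗮ` for `X` in `Sᗮ`. The matrix `1 - H H†` is the orthogonal projection onto the
orthogonal complement of the column space of `H`, which is a subspace of `Sᗮ`; summing over an
orthonormal basis of this smaller space, each column of `U` contributes `(n - k) / (n - κ)`.
-/

open Module ProbabilityTheory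
open scoped RealInnerProductSpace

section RotationInvariance

variable {E : Type*} [NormedAddCommGroup E] [InnerProductSpace ℝ E]
  {Ω : Type*} [MeasurableSpace Ω] {μ : Measure Ω} {X : Ω → E} {F G : Submodule ℝ E}

lemma norm_sq_starProjection_eq_sum {ι : Type*} [Fintype ι] [F.HasOrthogonalProjection]
    (b : OrthonormalBasis ι ℝ F) (x : E) : ‖F.starProjection x‖ ^ 2 = ∑ i, ⟪(b i : E), x⟫ ^ 2 := by
  calc ‖F.starProjection x‖ ^ 2 = ∑ i, ‖⟪b i, F.orthogonalProjectionOnto x⟫‖ ^ 2 :=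
        (b.sum_sq_norm_inner_right _).symm
    _ = ∑ i, ⟪(b i : E), x⟫ ^ 2 := by simp

lemma integral_norm_sq_starProjection_eq_sum {ι : Type*} [Fintype ι] [F.HasOrthogonalProjection]
    (hX : MemLp X 2 μ) (b : OrthonormalBasis ι ℝ F) :
    ∫ ω, ‖F.starProjection (X ω)‖ ^ 2 ∂μ = ∑ i, ∫ ω, ⟪(b i : E), X ω⟫ ^ 2 ∂μ := by
  simp only [norm_sq_starProjection_eq_sum b]
  exact integral_finsetSum _ fun i _ => (hX.const_inner (b i : E)).integrable_sq

variable [MeasurableSpace E]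

/-- The law of `X` is invariant under the orthogonal group of the subspace `G`, acting on `E` by
the linear isometries that fix the orthogonal complement of `G` pointwise. -/
def IsRotationInvariantOn (G : Submodule ℝ E) (X : Ω → E) (μ : Measure Ω) : Prop :=
  ∀ T : E ≃ₗᵢ[ℝ] E, (∀ s ∈ Gᗮ, T s = s) → IdentDistrib (fun ω => T (X ω)) X μ μ

namespace IsRotationInvariantOn

variable [BorelSpace E]

lemma integral_inner_sq_eq_of_norm_eq (hX : IsRotationInvariantOn G X μ) {u v : E} (hu : u ∈ G)
    (hv : v ∈ G) (huv : ‖u‖ = ‖v‖) : ∫ ω, ⟪u, X ω⟫ ^ 2 ∂μ = ∫ ω, ⟪v, X ω⟫ ^ 2 ∂μ := by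
  let T := (ℝ ∙ (u - v))ᗮ.reflection
  have fixes : ∀ s ∈ Gᗮ, T s = s := fun s hs =>
    Submodule.reflection_mem_subspace_eq_self <|
      Submodule.mem_orthogonal_singleton_iff_inner_right.mpr <|
        Submodule.inner_right_of_mem_orthogonal (G.sub_mem hu hv) hs
  have inner_T : ∀ x, ⟪u, T x⟫ = ⟪v, x⟫ := fun x => by
    rw [← Submodule.reflection_sub huv, LinearIsometryEquiv.inner_map_eq_flip,
      Submodule.reflection_symm]
  have hmeas : Measurable fun x : E => ⟪u, x⟫ ^ 2 := by fun_prop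
  simpa only [Function.comp_def, inner_T] using ((hX T fixes).comp hmeas).integral_eq.symm

lemma norm_sq_mul_integral_inner_sq (hX : IsRotationInvariantOn G X μ) {u v : E} (hu : u ∈ G)
    (hv : v ∈ G) : ‖u‖ ^ 2 * ∫ ω, ⟪v, X ω⟫ ^ 2 ∂μ = ‖v‖ ^ 2 * ∫ ω, ⟪u, X ω⟫ ^ 2 ∂μ := by
  have h := hX.integral_inner_sq_eq_of_norm_eq (G.smul_mem ‖u‖ hv) (G.smul_mem ‖v‖ hu)
    (by simp [norm_smul, mul_comm])
  simpa only [real_inner_smul_left, mul_pow, integral_const_mul] using h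

variable [FiniteDimensional ℝ G]

lemma integral_inner_sq (hX : IsRotationInvariantOn G X μ) (hX2 : MemLp X 2 μ) {u : E}
    (hu : u ∈ G) :
    ∫ ω, ⟪u, X ω⟫ ^ 2 ∂μ = ‖u‖ ^ 2 / finrank ℝ G * ∫ ω, ‖G.starProjection (X ω)‖ ^ 2 ∂μ := by
  obtain rfl | hu0 := eq_or_ne u 0
  · simp
  let b := stdOrthonormalBasis ℝ G
  have hG : (finrank ℝ G : ℝ) ≠ 0 := by
    have : Nontrivial G := ⟨⟨u, hu⟩, 0, by simpa using hu0⟩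
    exact_mod_cast finrank_pos.ne'
  have key : ∀ i, ‖u‖ ^ 2 * ∫ ω, ⟪(b i : E), X ω⟫ ^ 2 ∂μ = ∫ ω, ⟪u, X ω⟫ ^ 2 ∂μ := fun i => by
    have norm_b : ‖(b i : E)‖ = 1 := b.norm_eq_one i
    simpa [norm_b] using hX.norm_sq_mul_integral_inner_sq hu (b i).2
  rw [div_mul_eq_mul_div, eq_div_iff hG, integral_norm_sq_starProjection_eq_sum hX2 b,
    Finset.mul_sum, Finset.sum_congr rfl fun i _ => key i]
  simp [mul_comm]

variable [FiniteDimensional ℝ F]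

theorem integral_norm_sq_starProjection (hX : IsRotationInvariantOn G X μ) (hX2 : MemLp X 2 μ)
    (hFG : F ≤ G) :
    ∫ ω, ‖F.starProjection (X ω)‖ ^ 2 ∂μ =
      finrank ℝ F / finrank ℝ G * ∫ ω, ‖G.starProjection (X ω)‖ ^ 2 ∂μ := by
  let b := stdOrthonormalBasis ℝ F
  have norm_b : ∀ i, ‖(b i : E)‖ = 1 := b.norm_eq_one
  rw [integral_norm_sq_starProjection_eq_sum hX2 b,
    Finset.sum_congr rfl fun i _ => hX.integral_inner_sq hX2 (hFG (b i).2)]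
  simp only [norm_b, one_pow, Finset.sum_const, Finset.card_univ, Fintype.card_fin, nsmul_eq_mul]
  ring

theorem integral_sum_norm_sq_starProjection_of_norm_eq_one [SecondCountableTopology E]
    [IsProbabilityMeasure μ] {τ : Type*} [Fintype τ] {X : τ → Ω → E}
    (hX : ∀ a, IsRotationInvariantOn G (X a) μ) (hXG : ∀ a, ∀ᵐ ω ∂μ, X a ω ∈ G)
    (hX1 : ∀ a, ∀ᵐ ω ∂μ, ‖X a ω‖ = 1) (hFG : F ≤ G) :
    ∫ ω, ∑ a, ‖F.starProjection (X a ω)‖ ^ 2 ∂μ =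
      finrank ℝ F * Fintype.card τ / finrank ℝ G := by
  have hX2 : ∀ a, MemLp (X a) 2 μ := fun a =>
    .of_bound (hX a (.refl ℝ E) fun _ _ => rfl).aemeasurable_snd.aestronglyMeasurable 1
      ((hX1 a).mono fun _ h => h.le)
  have hproj : ∀ a, ∀ᵐ ω ∂μ, ‖G.starProjection (X a ω)‖ ^ 2 = 1 := fun a => by
    filter_upwards [hXG a, hX1 a] with ω hG h1
    rw [Submodule.starProjection_eq_self_iff.mpr hG, h1, one_pow]
  have hcol : ∀ a, ∫ ω, ‖F.starProjection (X a ω)‖ ^ 2 ∂μ = finrank ℝ F / finrank ℝ G := fun a => by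
    simp [(hX a).integral_norm_sq_starProjection (hX2 a) hFG, integral_congr_ae (hproj a)]
  have hint : ∀ a, Integrable (fun ω => ‖F.starProjection (X a ω)‖ ^ 2) μ := fun a =>
    (F.starProjection.comp_memLp' (hX2 a)).norm.integrable_sq
  rw [integral_finsetSum _ fun a _ => hint a]
  simp only [hcol, Finset.sum_const, Finset.card_univ, nsmul_eq_mul]
  ring

end IsRotationInvariantOn

end RotationInvariance

section EuclideanSubspace

variable {ι : Type*}

/-- A subspace of `ι → ℝ`, regarded as a subspace of the Euclidean space on `ι` so that norms,
orthogonality and projections refer to the dot product. -/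
noncomputable def euclideanSubspace (S : Submodule ℝ (ι → ℝ)) :
    Submodule ℝ (EuclideanSpace ℝ ι) :=
  S.map (WithLp.linearEquiv 2 ℝ (ι → ℝ)).symm.toLinearMap

namespace euclideanSubspace

variable {S : Submodule ℝ (ι → ℝ)}

lemma mem_iff {x : EuclideanSpace ℝ ι} : x ∈ euclideanSubspace S ↔ x.ofLp ∈ S := by
  simp [euclideanSubspace, Submodule.mem_map_equiv]

variable [Fintype ι]

lemma mem_orthogonal_iff {x : EuclideanSpace ℝ ι} :
    x ∈ (euclideanSubspace S)ᗮ ↔ ∀ s ∈ S, x.ofLp ⬝ᵥ s = 0 := by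
  simp only [Submodule.mem_orthogonal, mem_iff, EuclideanSpace.inner_eq_star_dotProduct,
    star_trivial]
  exact (WithLp.equiv 2 (ι → ℝ)).forall_congr fun {_} => Iff.rfl

lemma finrank_orthogonal (S : Submodule ℝ (ι → ℝ)) :
    (finrank ℝ (euclideanSubspace S)ᗮ : ℝ) = Fintype.card ι - finrank ℝ S := by
  have h := (euclideanSubspace S).finrank_add_finrank_orthogonal
  rw [euclideanSubspace, LinearEquiv.finrank_map_eq, finrank_euclideanSpace] at h
  rw [← h, euclideanSubspace]
  push_cast
  ring

end euclideanSubspace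

end EuclideanSubspace

section ResidualMatrix

variable {ι γ : Type*} [Fintype ι] [Fintype γ] [DecidableEq γ]

lemma isUnit_det_transpose_mul_self {H : Matrix ι γ ℝ} (hH : LinearIndependent ℝ H.col) :
    IsUnit (Hᵀ * H).det := by
  have h := Matrix.PosDef.conjTranspose_mul_self H (mulVec_injective_iff.mpr hH)
  rw [conjTranspose_eq_transpose_of_trivial] at h
  exact h.det_pos.ne'.isUnit

variable [DecidableEq ι]

/-- The matrix `1 - H H†`, with the pseudoinverse `H†` given by `(Hᵀ H)⁻¹ Hᵀ`, which is meaningful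
only when the columns of `H` are linearly independent. -/
noncomputable def residualMatrix (H : Matrix ι γ ℝ) : Matrix ι ι ℝ := 1 - H * ((Hᵀ * H)⁻¹ * Hᵀ)

lemma transpose_mul_residualMatrix {H : Matrix ι γ ℝ} (hH : LinearIndependent ℝ H.col) :
    Hᵀ * residualMatrix H = 0 := by
  rw [residualMatrix, Matrix.mul_sub, Matrix.mul_one, ← Matrix.mul_assoc,
    mul_nonsing_inv_cancel_left _ _ (isUnit_det_transpose_mul_self hH), sub_self]

lemma residualMatrix_mulVec_eq_starProjection {H : Matrix ι γ ℝ} (hH : LinearIndependent ℝ H.col)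
    (x : ι → ℝ) :
    WithLp.toLp 2 (residualMatrix H *ᵥ x) =
      (euclideanSubspace (Submodule.span ℝ (Set.range H.col)))ᗮ.starProjection
        (WithLp.toLp 2 x) := by
  refine (Submodule.eq_starProjection_of_mem_orthogonal ?_ ?_).symm
  · rw [euclideanSubspace.mem_orthogonal_iff, ← range_mulVecLin]
    rintro _ ⟨c, rfl⟩
    rw [mulVecLin_apply, dotProduct_mulVec, ← mulVec_transpose, mulVec_mulVec,
      transpose_mul_residualMatrix hH, zero_mulVec, zero_dotProduct]
  · rw [Submodule.orthogonal_orthogonal, euclideanSubspace.mem_iff, ← range_mulVecLin]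
    exact ⟨((Hᵀ * H)⁻¹ * Hᵀ) *ᵥ x, by simp [residualMatrix, sub_mulVec]⟩

lemma residualMatrix_mul_self {H : Matrix ι γ ℝ} (hH : LinearIndependent ℝ H.col) :
    residualMatrix H * H = 0 := by
  rw [residualMatrix, Matrix.sub_mul, Matrix.one_mul, Matrix.mul_assoc, Matrix.mul_assoc,
    nonsing_inv_mul _ (isUnit_det_transpose_mul_self hH), Matrix.mul_one, sub_self]

lemma residualMatrix_mul_eq_zero {σ : Type*} {H : Matrix ι γ ℝ} (hH : LinearIndependent ℝ H.col)
    {V : Matrix ι σ ℝ} (hV : ∀ a, V.col a ∈ Submodule.span ℝ (Set.range H.col)) :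
    residualMatrix H * V = 0 := by
  ext i a
  obtain ⟨c, hc⟩ : V.col a ∈ LinearMap.range H.mulVecLin := range_mulVecLin H ▸ hV a
  have h : residualMatrix H *ᵥ V.col a = 0 := by
    rw [← hc, mulVecLin_apply, mulVec_mulVec, residualMatrix_mul_self hH, zero_mulVec]
  exact congrFun h i

end ResidualMatrix

lemma linearIndependent_col_ite_of_surjective {ι γ R : Type*} [Finite γ] [DecidableEq γ]
    [CommSemiring R] {g : ι → γ} (hg : Function.Surjective g) :
    LinearIndependent R (Matrix.of fun i j => if g i = j then (1 : R) else 0).col := by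
  cases nonempty_fintype γ
  have pullback : (Matrix.of fun i j => if g i = j then (1 : R) else 0).mulVec = (· ∘ g) := by
    ext c i
    simp [mulVec, dotProduct]
  rw [← mulVec_injective_iff, pullback]
  exact hg.injective_comp_right

section RandomMatrix

variable {ι γ τ σ : Type*} [Fintype ι] [DecidableEq ι]
  {Ω : Type*} [MeasurableSpace Ω] {μ : Measure Ω} {U : Ω → ι → τ → ℝ} {S : Submodule ℝ (ι → ℝ)}

lemma isRotationInvariantOn_col (hU : AEMeasurable U μ)
    (hinv : ∀ Q : Matrix ι ι ℝ, Qᵀ * Q = 1 → (∀ s ∈ S, Q *ᵥ s = s) →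
      μ.map (fun ω i j => ∑ l, Q i l * U ω l j) = μ.map U) (a : τ) :
    IsRotationInvariantOn (euclideanSubspace S)ᗮ (fun ω => WithLp.toLp 2 fun i => U ω i a) μ := by
  intro T hT
  let e := EuclideanSpace.basisFun ι ℝ
  let Q : Matrix ι ι ℝ := T.toMatrix e.toBasis e.toBasis
  have hQ : ∀ x : ι → ℝ, WithLp.toLp 2 (Q *ᵥ x) = T (WithLp.toLp 2 x) := fun x =>
    congrArg (WithLp.toLp 2) <|
      LinearMap.toMatrix_mulVec_repr e.toBasis e.toBasis T.toLinearMap (WithLp.toLp 2 x)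
  have orthogonal_Q : Qᵀ * Q = 1 := mem_unitaryGroup_iff'.mp (T.toMatrix_mem_unitaryGroup e e)
  have fixes_S : ∀ s ∈ S, Q *ᵥ s = s := fun s hs => WithLp.toLp_injective 2 <| by
    rw [hQ, hT]
    rwa [Submodule.orthogonal_orthogonal, euclideanSubspace.mem_iff]
  have hmul : Measurable fun (A : ι → τ → ℝ) i j => ∑ l, Q i l * A l j := by fun_prop
  have law_eq : IdentDistrib (fun ω i j => ∑ l, Q i l * U ω l j) U μ μ :=
    ⟨hmul.comp_aemeasurable hU, hU, hinv Q orthogonal_Q fixes_S⟩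
  have hcol : Measurable fun A : ι → τ → ℝ => WithLp.toLp 2 fun i => A i a := by fun_prop
  simp only [← hQ]
  exact law_eq.comp hcol

theorem conditional_expected_projection_error_general [Fintype γ] [DecidableEq γ] [Fintype τ]
    [Fintype σ] {H : Matrix ι γ ℝ} (hH : LinearIndependent ℝ H.col)
    (hS : S ≤ Submodule.span ℝ (Set.range H.col)) [IsProbabilityMeasure μ]
    (hU : AEMeasurable U μ)
    (hunit : ∀ᵐ ω ∂μ, ∀ a, ∑ i, U ω i a ^ 2 = 1)
    (horth : ∀ᵐ ω ∂μ, ∀ a, ∀ s ∈ S, ∑ i, U ω i a * s i = 0)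
    (hinv : ∀ Q : Matrix ι ι ℝ, Qᵀ * Q = 1 → (∀ s ∈ S, Q *ᵥ s = s) →
      μ.map (fun ω i j => ∑ l, Q i l * U ω l j) = μ.map U) :
    (∫ ω, ∑ i, ∑ a, (residualMatrix H * of (U ω)) i a ^ 2 ∂μ =
      ((Fintype.card ι : ℝ) - Fintype.card γ) * Fintype.card τ /
        ((Fintype.card ι : ℝ) - finrank ℝ S)) ∧
    ∀ V : Matrix ι σ ℝ, (∀ a, V.col a ∈ S) →
      ∫ ω, (∑ i, ∑ a, (residualMatrix H * V) i a ^ 2 +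
          ∑ i, ∑ a, (residualMatrix H * of (U ω)) i a ^ 2) ∂μ =
        ((Fintype.card ι : ℝ) - Fintype.card γ) * Fintype.card τ /
          ((Fintype.card ι : ℝ) - finrank ℝ S) := by
  let K := Submodule.span ℝ (Set.range H.col)
  let X (a : τ) (ω : Ω) : EuclideanSpace ℝ ι := WithLp.toLp 2 fun i => U ω i a
  have hcols : ∀ ω, ∑ i, ∑ a, (residualMatrix H * of (U ω)) i a ^ 2 =
      ∑ a, ‖(euclideanSubspace K)ᗮ.starProjection (X a ω)‖ ^ 2 := fun ω => by
    simp only [X, K, ← residualMatrix_mulVec_eq_starProjection hH, EuclideanSpace.real_norm_sq_eq]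
    exact Finset.sum_comm
  have hFG : (euclideanSubspace K)ᗮ ≤ (euclideanSubspace S)ᗮ :=
    Submodule.orthogonal_le (Submodule.map_mono hS)
  have hU_error := IsRotationInvariantOn.integral_sum_norm_sq_starProjection_of_norm_eq_one (X := X)
    (isRotationInvariantOn_col hU hinv)
    (fun a => horth.mono fun ω h => euclideanSubspace.mem_orthogonal_iff.mpr (h a))
    (fun a => hunit.mono fun ω h => by simp [X, EuclideanSpace.norm_eq, h a]) hFG
  simp only [euclideanSubspace.finrank_orthogonal, K, finrank_span_eq_card hH, ← hcols] at hU_error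
  refine ⟨hU_error, fun V hV => ?_⟩
  simpa [residualMatrix_mul_eq_zero hH fun a => hS (hV a)] using hU_error

end RandomMatrix

/-- Let `H` be a partition indicator matrix into `k` nonempty groups, `S ⊆ ℝⁿ`
a `κ`-dimensional subspace (`1 ≤ κ ≤ k ≤ n`) contained in the column span of `H`, and `U` a
random `n × (k−κ)` matrix whose columns are a.s. orthonormal and orthogonal to `S`, with
distribution invariant under every orthogonal `Q ∈ O(n)` fixing `S` pointwise.  Then
`E[‖(I − H H†) U‖_F²] = (n−k)(k−κ)/(n−κ)`; moreover, appending any columns `V_S` lying in `S`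
to form `B = [V_S, U]` gives the same expected projection error. -/
theorem conditional_expected_projection_error
    {n k κ : ℕ} (hκ : 1 ≤ κ) (hκk : κ ≤ k) (hkn : k ≤ n)
    (g : Fin n → Fin k) (hg : Function.Surjective g)
    (H : Matrix (Fin n) (Fin k) ℝ)
    (hH : H = Matrix.of fun i j => if g i = j then (1 : ℝ) else 0)
    (Hdag : Matrix (Fin k) (Fin n) ℝ) (hHdag : Hdag = (Hᵀ * H)⁻¹ * Hᵀ)
    (P : Matrix (Fin n) (Fin n) ℝ) (hP : P = 1 - H * Hdag)
    (S : Submodule ℝ (Fin n → ℝ)) (hSdim : Module.finrank ℝ S = κ)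
    (hSsub : S ≤ Submodule.span ℝ (Set.range fun j : Fin k => fun i : Fin n => H i j))
    {Ω : Type*} [MeasurableSpace Ω] (μ : Measure Ω) [IsProbabilityMeasure μ]
    (U : Ω → Fin n → Fin (k - κ) → ℝ) (hUmeas : Measurable U)
    (horth : ∀ᵐ ω ∂μ,
      (∀ a b : Fin (k - κ), ∑ i, U ω i a * U ω i b = if a = b then (1 : ℝ) else 0)
      ∧ (∀ a : Fin (k - κ), ∀ s ∈ S, ∑ i, U ω i a * s i = 0))
    (hinv : ∀ Q : Matrix (Fin n) (Fin n) ℝ, Qᵀ * Q = 1 → (∀ s ∈ S, Q.mulVec s = s) →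
      Measure.map (fun ω => fun i j => ∑ l, Q i l * U ω l j) μ = Measure.map U μ) :
    (∫ ω, (∑ i, ∑ j, (∑ l, P i l * U ω l j) ^ 2) ∂μ
        = ((n : ℝ) - k) * ((k : ℝ) - κ) / ((n : ℝ) - κ))
    ∧ ∀ VS : Matrix (Fin n) (Fin κ) ℝ, (∀ a : Fin κ, (fun i => VS i a) ∈ S) →
        ∫ ω, ((∑ i, ∑ a : Fin κ, (∑ l, P i l * VS l a) ^ 2)
            + ∑ i, ∑ j, (∑ l, P i l * U ω l j) ^ 2) ∂μ
          = ((n : ℝ) - k) * ((k : ℝ) - κ) / ((n : ℝ) - κ) := by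
  subst hH hHdag hP hSdim
  simpa only [Fintype.card_fin, Nat.cast_sub hκk] using!
    conditional_expected_projection_error_general (linearIndependent_col_ite_of_surjective hg)
      hSsub hUmeas.aemeasurable (horth.mono fun ω h a => by simpa [sq] using h.1 a a)
      (horth.mono fun ω h => h.2) hinv
end
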